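/- Suppose f : [−1,1]² → ℂ and g : [−1,1]² → ℝ are infinitely differentiable with G₀ := min_{[−1,1]²} |∂g/∂x| > 0, and set G₁ = max_{[−1,1]²} |∂g/∂x|, W = max_{y∈[−1,1]} |∫_{−1}^{1} (∂g/∂x)(x,y) dx|, and M = sup_{[−1,1]²} |f|. Let 0 < ε < 1/2, let C ≥ 1, and suppose p_b : [−1,1]² → ℂ is infinitely differentiable and satisfies: |∂p_b/∂x + i (∂g/∂x) p_b − f| ≤ ε (G₁/G₀) M pointwise on [−1,1]²; sup |p_b| ≤ C (W/G₀) min{1, 1/W} M; and sup |∂p_b/∂x| ≤ C (G₁/G₀) min{1, 1/W} M. Suppose further that k ≥ 2 is such that sup |P_k[p_b] − p_b| ≤ ε sup |p_b|, sup |∂/∂x P_k[p_b] − ∂p_b/∂x| ≤ ε sup |∂p_b/∂x|, sup |P_k[∂g/∂x] − ∂g/∂x| ≤ ε G₁, and sup |P_{2k−1}[f] − f| ≤ ε M (all sups over [−1,1]²). Then for all (x,y) ∈ [−1,1]²: |∂/∂x P_k[p_b](x,y) + i P_k[∂g/∂x](x,y) · P_k[p_b](x,y) − P_{2k−1}[f](x,y)|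 ≤ 6 ε C (G₁/G₀) M. -/

import Mathlib

open Real

noncomputable section

/-- The `k`-point Chebyshev grid on `[-1,1]`: the nodes `t_{j,k} = cos((k-j)π/(k-1))`,
`j = 1, …, k`, here indexed by `j : Fin k` (so the paper's index is `j + 1`). -/
def chebNode (k : ℕ) (j : Fin k) : ℝ :=
  Real.cos (((k : ℝ) - 1 - (j : ℝ)) * π / ((k : ℝ) - 1))

/-- The unit square `[-1,1]²`. -/
def unitSq : Set (ℝ × ℝ) := Set.Icc ((-1, -1) : ℝ × ℝ) ((1, 1) : ℝ × ℝ)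

/-- The sup of `‖f‖` over a subset `S` of `ℝ²`. -/
def supOn (f : ℝ × ℝ → ℂ) (S : Set (ℝ × ℝ)) : ℝ := ⨆ z : S, ‖f (z : ℝ × ℝ)‖

/-- The partial derivative `∂/∂x` of a complex-valued function on `ℝ²`. -/
def pd1 (f : ℝ × ℝ → ℂ) : ℝ × ℝ → ℂ := fun z => fderiv ℝ f z (1, 0)

/-!
Since `W min{1, 1/W} ≤ 1`, the hypotheses bound `p_b`, `∂ₓ p_b` and `g_x` by `B`, `G₁ B` and `G₁`,
where `B = C M / G₀`. As `C ≥ 1` and `G₁ ≥ G₀`, both `M` and `(G₁ / G₀) M` are at most `G₁ B`, so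
the residual of `p_b` and the errors in `∂ₓ p_b` and `f` are each at most `ε G₁ B`. The product
`g_x p_b`, whose factors both carry a relative error `ε`, contributes at most `(2 + ε) ε G₁ B`.
Altogether this is `(5 + ε) ε G₁ B`.
-/

section RelativeError

variable {R : Type*} [NonUnitalSeminormedRing R] {a a' u u' : R} {A B ε : ℝ}

theorem norm_mul_sub_mul_le_of_relative_error (ha : ‖a‖ ≤ A) (hu : ‖u‖ ≤ B)
    (ha' : ‖a' - a‖ ≤ ε * A) (hu' : ‖u' - u‖ ≤ ε * B) :
    ‖a' * u' - a * u‖ ≤ (2 + ε) * ε * (A * B) :=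
  calc ‖a' * u' - a * u‖
      = ‖a * (u' - u) + (a' - a) * u + (a' - a) * (u' - u)‖ := by congr 1; noncomm_ring
    _ ≤ A * (ε * B) + ε * A * B + ε * A * (ε * B) :=
      norm_add_le_of_le (norm_add_le_of_le (norm_mul_le_of_le ha hu') (norm_mul_le_of_le ha' hu))
        (norm_mul_le_of_le ha' hu')
    _ = (2 + ε) * ε * (A * B) := by ring

theorem norm_add_mul_sub_le_of_relative_error {b b' d d' : R} (ha : ‖a‖ ≤ A) (hu : ‖u‖ ≤ B)
    (hres : ‖d + a * u - b‖ ≤ ε * (A * B))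
    (ha' : ‖a' - a‖ ≤ ε * A) (hu' : ‖u' - u‖ ≤ ε * B)
    (hd' : ‖d' - d‖ ≤ ε * (A * B)) (hb' : ‖b' - b‖ ≤ ε * (A * B)) :
    ‖d' + a' * u' - b'‖ ≤ (5 + ε) * ε * (A * B) :=
  calc ‖d' + a' * u' - b'‖
      = ‖(d + a * u - b) + (d' - d) + (a' * u' - a * u) - (b' - b)‖ := by congr 1; abel
    _ ≤ ε * (A * B) + ε * (A * B) + (2 + ε) * ε * (A * B) + ε * (A * B) :=
      norm_sub_le_of_le (norm_add_le_of_le (norm_add_le_of_le hres hd')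
        (norm_mul_sub_mul_le_of_relative_error ha hu ha' hu')) hb'
    _ = (5 + ε) * ε * (A * B) := by ring

end RelativeError

theorem norm_I_mul_ofReal (r : ℝ) : ‖Complex.I * (r : ℂ)‖ = |r| := by
  rw [norm_mul, Complex.norm_I, one_mul, Complex.norm_real, Real.norm_eq_abs]

theorem norm_I_mul_ofReal_sub (r s : ℝ) :
    ‖Complex.I * (r : ℂ) - Complex.I * (s : ℂ)‖ = |r - s| := by
  rw [← mul_sub, ← Complex.ofReal_sub, norm_I_mul_ofReal]

theorem mul_min_one_inv_le_one (w : ℝ) : w * min 1 w⁻¹ ≤ 1 := by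
  rcases le_total 0 w with hw | hw
  · exact (mul_le_mul_of_nonneg_left (min_le_right _ _) hw).trans mul_inv_le_one
  · rw [min_eq_right ((inv_nonpos.mpr hw).trans zero_le_one)]
    exact mul_inv_le_one

theorem mul_div_mul_min_one_inv_mul_le {C G M : ℝ} (hC : 0 ≤ C) (hG : 0 ≤ G) (hM : 0 ≤ M)
    (w : ℝ) : C * (w / G) * min 1 w⁻¹ * M ≤ C / G * M :=
  calc C * (w / G) * min 1 w⁻¹ * M = C / G * M * (w * min 1 w⁻¹) := by ring
    _ ≤ C / G * M := mul_le_of_le_one_right (by positivity) (mul_min_one_inv_le_one w)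

theorem supOn_nonneg (f : ℝ × ℝ → ℂ) (S : Set (ℝ × ℝ)) : 0 ≤ supOn f S :=
  Real.iSup_nonneg fun _ => norm_nonneg _

theorem supOn_le {f : ℝ × ℝ → ℂ} {S : Set (ℝ × ℝ)} {B : ℝ} (hB : 0 ≤ B)
    (hf : ∀ z ∈ S, ‖f z‖ ≤ B) : supOn f S ≤ B :=
  Real.iSup_le (fun z => hf z z.2) hB

theorem levin_collocation_residual_bound_general {S : Set (ℝ × ℝ)} {f p P F : ℝ × ℝ → ℂ}
    {a A : ℝ × ℝ → ℝ} {G₀ G₁ M ε C : ℝ} (hG₀ : 0 < G₀)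
    (ha₀ : ∀ z ∈ S, G₀ ≤ |a z|) (ha₁ : ∀ z ∈ S, |a z| ≤ G₁)
    (hM : 0 ≤ M) (hε : 0 ≤ ε) (hC : 1 ≤ C)
    (hres : ∀ z ∈ S, ‖pd1 p z + Complex.I * (a z : ℂ) * p z - f z‖ ≤ ε * (G₁ / G₀) * M)
    (hp : ∀ z ∈ S, ‖p z‖ ≤ C / G₀ * M)
    (hpx : ∀ z ∈ S, ‖pd1 p z‖ ≤ C * (G₁ / G₀) * M)
    (hP : ∀ z ∈ S, ‖P z - p z‖ ≤ ε * supOn p S)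
    (hPx : ∀ z ∈ S, ‖pd1 P z - pd1 p z‖ ≤ ε * supOn (pd1 p) S)
    (hA : ∀ z ∈ S, |A z - a z| ≤ ε * G₁)
    (hF : ∀ z ∈ S, ‖F z - f z‖ ≤ ε * M) :
    ∀ z ∈ S, ‖pd1 P z + Complex.I * (A z : ℂ) * P z - F z‖ ≤
      (5 + ε) * ε * C * (G₁ / G₀) * M := by
  intro z hz
  have one_le_ratio : 1 ≤ G₁ / G₀ := (one_le_div hG₀).mpr ((ha₀ z hz).trans (ha₁ z hz))
  have hGM : 0 ≤ G₁ / G₀ * M := by positivity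
  have product_bound : G₁ * (C / G₀ * M) = C * (G₁ / G₀ * M) := by ring
  have ratio_le : G₁ / G₀ * M ≤ G₁ * (C / G₀ * M) :=
    product_bound ▸ le_mul_of_one_le_left hGM hC
  have data_le : M ≤ G₁ * (C / G₀ * M) := (le_mul_of_one_le_left hM one_le_ratio).trans ratio_le
  have supOn_p_le : supOn p S ≤ C / G₀ * M := supOn_le (by positivity) hp
  have supOn_px_le : supOn (pd1 p) S ≤ G₁ * (C / G₀ * M) :=
    supOn_le (hM.trans data_le) fun w hw => (hpx w hw).trans_eq (by ring)
  calc ‖pd1 P z + Complex.I * (A z : ℂ) * P z - F z‖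
      ≤ (5 + ε) * ε * (G₁ * (C / G₀ * M)) :=
        norm_add_mul_sub_le_of_relative_error
          ((norm_I_mul_ofReal _).trans_le (ha₁ z hz)) (hp z hz)
          ((hres z hz).trans (mul_assoc ε _ M ▸ mul_le_mul_of_nonneg_left ratio_le hε))
          ((norm_I_mul_ofReal_sub _ _).trans_le (hA z hz))
          ((hP z hz).trans (mul_le_mul_of_nonneg_left supOn_p_le hε))
          ((hPx z hz).trans (mul_le_mul_of_nonneg_left supOn_px_le hε))
          ((hF z hz).trans (mul_le_mul_of_nonneg_left data_le hε))
    _ = (5 + ε) * ε * C * (G₁ / G₀) * M := by ring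

/-- Discretization error of the Levin collocation scheme: given a
slowly-varying approximate solution `p_b` of the Levin equation `p_x + i g_x p = f` and
accurate Chebyshev interpolants `P_k[p_b]`, `P_k[g_x]`, `P_{2k-1}[f]`, the interpolated
residual satisfies
`|∂ₓP_k[p_b] + i P_k[g_x] P_k[p_b] - P_{2k-1}[f]| ≤ 6εC(G₁/G₀)M` on `[-1,1]²`. -/
theorem levin_collocation_residual_bound
    (f : ℝ × ℝ → ℂ) (g : ℝ × ℝ → ℝ) (U : Set (ℝ × ℝ))
    (hUopen : IsOpen U) (hQU : unitSq ⊆ U)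
    (hfsm : ContDiffOn ℝ (⊤ : ℕ∞) f U) (hgsm : ContDiffOn ℝ (⊤ : ℕ∞) g U)
    (gx : ℝ × ℝ → ℝ) (hgx : ∀ z : ℝ × ℝ, gx z = fderiv ℝ g z ((1 : ℝ), (0 : ℝ)))
    (G₀ G₁ W M : ℝ)
    (hG₀ : IsLeast {r : ℝ | ∃ z ∈ unitSq, r = |gx z|} G₀) (hG₀pos : 0 < G₀)
    (hG₁ : IsGreatest {r : ℝ | ∃ z ∈ unitSq, r = |gx z|} G₁)
    (hW : IsGreatest {r : ℝ | ∃ y ∈ Set.Icc (-1 : ℝ) 1,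
      r = |∫ t in (-1 : ℝ)..1, gx (t, y)|} W)
    (hM : M = supOn f unitSq)
    (ε : ℝ) (hε0 : 0 < ε) (hε : ε < 1 / 2) (C : ℝ) (hC : 1 ≤ C)
    (pb : ℝ × ℝ → ℂ)
    (V : Set (ℝ × ℝ)) (hVopen : IsOpen V) (hQV : unitSq ⊆ V)
    (hpbsm : ContDiffOn ℝ (⊤ : ℕ∞) pb V)
    (hres : ∀ z ∈ unitSq,
      ‖pd1 pb z + Complex.I * (gx z : ℂ) * pb z - f z‖ ≤ ε * (G₁ / G₀) * M)
    (hpb : ∀ z ∈ unitSq, ‖pb z‖ ≤ C * (W / G₀) * min 1 W⁻¹ * M)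
    (hpbx : ∀ z ∈ unitSq, ‖pd1 pb z‖ ≤ C * (G₁ / G₀) * min 1 W⁻¹ * M)
    (k : ℕ) (hk : 2 ≤ k)
    (ap : Fin k → Fin k → ℂ) (Pp : ℝ × ℝ → ℂ)
    (hPp : ∀ z : ℝ × ℝ,
      Pp z = ∑ i : Fin k, ∑ j : Fin k, ap i j * (z.1 : ℂ) ^ (i : ℕ) * (z.2 : ℂ) ^ (j : ℕ))
    (hPpinterp : ∀ i j : Fin k,
      Pp (chebNode k i, chebNode k j) = pb (chebNode k i, chebNode k j))
    (ag : Fin k → Fin k → ℝ) (Pg : ℝ × ℝ → ℝ)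
    (hPg : ∀ z : ℝ × ℝ,
      Pg z = ∑ i : Fin k, ∑ j : Fin k, ag i j * z.1 ^ (i : ℕ) * z.2 ^ (j : ℕ))
    (hPginterp : ∀ i j : Fin k,
      Pg (chebNode k i, chebNode k j) = gx (chebNode k i, chebNode k j))
    (af : Fin (2 * k - 1) → Fin (2 * k - 1) → ℂ) (Pf : ℝ × ℝ → ℂ)
    (hPf : ∀ z : ℝ × ℝ,
      Pf z = ∑ i : Fin (2 * k - 1), ∑ j : Fin (2 * k - 1),
        af i j * (z.1 : ℂ) ^ (i : ℕ) * (z.2 : ℂ) ^ (j : ℕ))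
    (hPfinterp : ∀ i j : Fin (2 * k - 1),
      Pf (chebNode (2 * k - 1) i, chebNode (2 * k - 1) j) =
        f (chebNode (2 * k - 1) i, chebNode (2 * k - 1) j))
    (hPperr : ∀ z ∈ unitSq, ‖Pp z - pb z‖ ≤ ε * supOn pb unitSq)
    (hPpxerr : ∀ z ∈ unitSq, ‖pd1 Pp z - pd1 pb z‖ ≤ ε * supOn (pd1 pb) unitSq)
    (hPgerr : ∀ z ∈ unitSq, |Pg z - gx z| ≤ ε * G₁)
    (hPferr : ∀ z ∈ unitSq, ‖Pf z - f z‖ ≤ ε * M) :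
    ∀ z ∈ unitSq,
      ‖pd1 Pp z + Complex.I * (Pg z : ℂ) * Pp z - Pf z‖ ≤ 6 * ε * C * (G₁ / G₀) * M := by
  have hM₀ : 0 ≤ M := hM ▸ supOn_nonneg f unitSq
  have hC₀ : 0 ≤ C := zero_le_one.trans hC
  have hG₁₀ : 0 ≤ G₁ := hG₀pos.le.trans (hG₁.2 hG₀.1)
  intro z hz
  calc ‖pd1 Pp z + Complex.I * (Pg z : ℂ) * Pp z - Pf z‖
      ≤ (5 + ε) * ε * C * (G₁ / G₀) * M :=
        levin_collocation_residual_bound_general hG₀pos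
          (fun w hw => hG₀.2 ⟨w, hw, rfl⟩) (fun w hw => hG₁.2 ⟨w, hw, rfl⟩) hM₀ hε0.le hC hres
          (fun w hw => (hpb w hw).trans (mul_div_mul_min_one_inv_mul_le hC₀ hG₀pos.le hM₀ W))
          (fun w hw => (hpbx w hw).trans <| mul_le_mul_of_nonneg_right
            (mul_le_of_le_one_right (by positivity) (min_le_left _ _)) hM₀)
          hPperr hPpxerr hPgerr hPferr z hz
    _ ≤ 6 * ε * C * (G₁ / G₀) * M := by gcongr; linarith
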